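/- Let σ₁, …, σ_k > 0. For each i, let θᵢ : ℝ^d × ℝ^{d₁} × ⋯ × ℝ^{d_{i−1}} → ℝ^{d_i} be measurable and 1-Lipschitz in its first argument uniformly in the others: ‖θᵢ(X, m_{<i}) − θᵢ(X', m_{<i})‖₂ ≤ ‖X − X'‖₂ for all X, X' and all m_{<i}. Let g : ℝ^{d₁} × ⋯ × ℝ^{d_k} → Y be measurable into a finite label set Y. Define the adaptive mechanism M(X) ∈ Y as g(m₁, …, m_k), where mᵢ = θᵢ(X, m_{<i}) + zᵢ and the zᵢ ∼ N(0, σᵢ²I_{d_i}) are independent. Let X ∈ ℝ^d, y₊ ∈ Y, and p₊, p₋ ∈ (0,1) satisfy P(M(X) = y₊) ≥ p₊ ≥ p₋ ≥ max_{y ≠ y₊} P(M(X) = y). Set r_X = (1/(2√(Σ_{i=1}^k 1/σᵢ²)))·(Φ⁻¹(p₊) − Φ⁻¹(p₋)). Then for every e ∈ ℝ^d with ‖e‖₂ ≤ r_X and every y ∈ Y, P(M(X+e) = y₊) ≥ P(M(X+e) = y); that is, y₊ remains a most probable class at X + e. -/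

import Mathlib

open MeasureTheory ProbabilityTheory Real
open scoped NNReal ENNReal

/-- Standard normal CDF Φ. -/
noncomputable def Phi (x : ℝ) : ℝ := ((gaussianReal 0 1) (Set.Iic x)).toReal

/-- Inverse of the standard normal CDF, Φ⁻¹. -/
noncomputable def PhiInv (q : ℝ) : ℝ := Function.invFun Phi q

/-- The trade-off function of the Gaussian mechanism, `G_μ(α) = Φ(Φ⁻¹(1-α) − μ)`. -/
noncomputable def Gmu (μ α : ℝ) : ℝ := Phi (PhiInv (1 - α) - μ)

/-- Euclidean (L2) norm on `ℝ^n`. -/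
noncomputable def l2norm {n : ℕ} (x : Fin n → ℝ) : ℝ := Real.sqrt (∑ i, (x i) ^ 2)

/-- Maximum (L∞) norm on `ℝ^n`. -/
noncomputable def linftyNorm {n : ℕ} (x : Fin n → ℝ) : ℝ := ⨆ i, |x i|

/-- Lp norm on `ℝ^n`. -/
noncomputable def lpNorm {n : ℕ} (p : ℝ) (x : Fin n → ℝ) : ℝ := (∑ i, |x i| ^ p) ^ (1 / p)

/-- `T(P,Q) ≥ f`: every measurable `[0,1]`-valued test `φ` has type II error
`1 − ∫ φ dQ` at least `f` of its level `∫ φ dP`. -/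
def TradeoffGE {Ω : Type*} [MeasurableSpace Ω] (P Q : Measure Ω) (f : ℝ → ℝ) : Prop :=
  ∀ φ : Ω → ℝ, Measurable φ → (∀ ω, φ ω ∈ Set.Icc (0 : ℝ) 1) →
    1 - ∫ ω, φ ω ∂Q ≥ f (∫ ω, φ ω ∂P)

/-- The Gaussian measure `N(v, s·I_d)` on `ℝ^d` (spherical covariance `s ≥ 0`). -/
noncomputable def gaussPi (d : ℕ) (v : Fin d → ℝ) (s : ℝ≥0) : Measure (Fin d → ℝ) :=
  Measure.pi fun i => gaussianReal (v i) s

/-- Deterministic recursion computing the adaptive trajectory: having fixed the input `X`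
and the independent noises `z j`, `trajAux θ X z n` carries the outputs
`m_i = θ_i(X, m_{<i}) + z_i` for the first `n` steps (and `0` on the remaining
coordinates). -/
noncomputable def trajAux {k d : ℕ} {dims : Fin k → ℕ}
    (θ : ∀ i : Fin k, (Fin d → ℝ) → (∀ j : Fin k, Fin (dims j) → ℝ) → (Fin (dims i) → ℝ))
    (X : Fin d → ℝ) (z : ∀ j : Fin k, Fin (dims j) → ℝ) :
    ℕ → ∀ j : Fin k, Fin (dims j) → ℝ
  | 0 => fun _ _ => 0
  | n + 1 =>
      if h : n < k then
        Function.update (trajAux θ X z n) ⟨n, h⟩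
          (θ ⟨n, h⟩ X (trajAux θ X z n) + z ⟨n, h⟩)
      else trajAux θ X z n

/-- The full adaptive trajectory `(m₁, …, m_k)` as a function of the input `X` and the
noises `z`. -/
noncomputable def traj {k d : ℕ} {dims : Fin k → ℕ}
    (θ : ∀ i : Fin k, (Fin d → ℝ) → (∀ j : Fin k, Fin (dims j) → ℝ) → (Fin (dims i) → ℝ))
    (X : Fin d → ℝ) (z : ∀ j : Fin k, Fin (dims j) → ℝ) :
    ∀ j : Fin k, Fin (dims j) → ℝ :=
  trajAux θ X z k

/-- The law of the adaptive mechanism `M(X) = g(m₁, …, m_k)`, where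
`m_i = θ_i(X, m_{<i}) + z_i` and the `z_i ∼ N(0, σ_i² I_{d_i})` are independent. -/
noncomputable def adaptiveMech {k d : ℕ} {dims : Fin k → ℕ} {Y : Type*} [MeasurableSpace Y]
    (θ : ∀ i : Fin k, (Fin d → ℝ) → (∀ j : Fin k, Fin (dims j) → ℝ) → (Fin (dims i) → ℝ))
    (g : (∀ j : Fin k, Fin (dims j) → ℝ) → Y) (σ : Fin k → ℝ) (X : Fin d → ℝ) :
    Measure Y :=
  Measure.map (fun z => g (traj θ X z))
    (Measure.pi fun j => gaussPi (dims j) 0 ((σ j) ^ 2).toNNReal)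

/-! Two measures `P`, `Q` are compared through the hockey-stick functional
`x * Q(G') - c * P(G)`, and the yardstick is the pair `N(0, w)`, `N(w, w)`, whose log-likelihood
ratio `t - w / 2` is itself Gaussian. A Gaussian pair at distance `δ` is exactly as distinguishable
as the yardstick with `w = δ² / s`. In an adaptive composition the budget spent by a step may depend
on the past; raising it to its upper bound only increases the hockey-stick functional, by Jensen's
inequality, and Gaussian log-likelihood ratios of constant variance add up. Hence the laws of the
trajectories at `X` and `X + e` are no easier to tell apart than `N(0, 1)` and `N(√w, 1)` with
`w = ‖e‖² ∑ 1 / σᵢ²`, and the Neyman-Pearson tests of the latter pair are half-lines. -/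

section StandardNormal

lemma continuous_cdf (μ : Measure ℝ) [IsProbabilityMeasure μ] [NullSingletonClass μ] :
    Continuous (cdf μ) := by
  refine continuous_iff_continuousAt.2 fun x => continuousAt_iff_continuous_left_right.2
    ⟨?_, (cdf μ).right_continuous x⟩
  have hjump : ENNReal.ofReal (cdf μ x - Function.leftLim (cdf μ) x) = 0 := by
    rw [← (cdf μ).measure_singleton, measure_cdf, measure_singleton]
  rw [← continuousWithinAt_Iio_iff_Iic, (cdf μ).mono.continuousWithinAt_Iio_iff_leftLim_eq]
  exact ((cdf μ).mono.leftLim_le le_rfl).antisymm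
    (sub_nonpos.1 (ENNReal.ofReal_eq_zero.1 hjump))

lemma Phi_eq_cdf : Phi = cdf (gaussianReal 0 1) := by
  ext x
  rw [cdf_eq_real]
  rfl

lemma Phi_mono : Monotone Phi := Phi_eq_cdf ▸ monotone_cdf _

lemma continuous_Phi : Continuous Phi := by
  have := nullSingletonClass_gaussianReal (μ := 0) (v := 1) one_ne_zero
  exact Phi_eq_cdf ▸ continuous_cdf _

lemma Phi_PhiInv {p : ℝ} (hp : p ∈ Set.Ioo (0 : ℝ) 1) : Phi (PhiInv p) = p := by
  have hbot : Filter.Tendsto Phi Filter.atBot (nhds 0) := Phi_eq_cdf ▸ tendsto_cdf_atBot _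
  have htop : Filter.Tendsto Phi Filter.atTop (nhds 1) := Phi_eq_cdf ▸ tendsto_cdf_atTop _
  obtain ⟨a, ha⟩ := (hbot.eventually_lt_const hp.1).exists
  obtain ⟨b, hb⟩ := (htop.eventually_const_lt hp.2).exists
  exact Function.invFun_eq
    (mem_range_of_exists_le_of_exists_ge continuous_Phi ⟨a, ha.le⟩ ⟨b, hb.le⟩)

lemma monotoneOn_PhiInv : MonotoneOn PhiInv (Set.Ioo 0 1) := by
  intro p hp q hq hpq
  by_contra! hlt
  have hqp : q ≤ p := by simpa only [Phi_PhiInv hp, Phi_PhiInv hq] using Phi_mono hlt.le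
  exact hlt.ne (by rw [hpq.antisymm hqp])

lemma gaussianReal_Ici_neg (a : ℝ) :
    gaussianReal 0 1 (Set.Ici (-a)) = gaussianReal 0 1 (Set.Iic a) := by
  conv_lhs => rw [← neg_zero, ← gaussianReal_map_neg]
  rw [Measure.map_apply measurable_neg measurableSet_Ici]
  congr 1
  ext t
  simp

lemma Phi_neg (a : ℝ) : Phi (-a) = 1 - Phi a := by
  have := nullSingletonClass_gaussianReal (μ := 0) (v := 1) one_ne_zero
  rw [Phi, ← gaussianReal_Ici_neg, neg_neg, ← measure_congr Ioi_ae_eq_Ici, ← Set.compl_Iic]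
  exact probReal_compl_eq_one_sub measurableSet_Iic

end StandardNormal

section GaussianTilting

lemma gaussianReal_eq_withDensity (b : ℝ) (v : ℝ≥0) :
    gaussianReal (v * b) v = (gaussianReal 0 v).withDensity
      fun t => ENNReal.ofReal (exp (b * t - v * b ^ 2 / 2)) := by
  rcases eq_or_ne v 0 with rfl | hv
  · refine (Measure.ext_of_lintegral _ fun f hf => ?_).symm
    rw [lintegral_withDensity_eq_lintegral_mul _ (by fun_prop) hf]
    simp [gaussianReal_zero_var, lintegral_dirac]
  rw [gaussianReal_of_var_ne_zero _ hv, gaussianReal_of_var_ne_zero _ hv,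
    ← withDensity_mul _ (measurable_gaussianPDF _ _) (by fun_prop)]
  congr 1
  ext t
  rw [Pi.mul_apply, gaussianPDF, gaussianPDF, ← ENNReal.ofReal_mul (gaussianPDFReal_nonneg _ _ _),
    gaussianPDFReal, gaussianPDFReal, mul_assoc _ (exp _) (exp _), ← exp_add]
  congr 3
  field_simp
  ring

lemma lintegral_exp_gaussianReal (v : ℝ≥0) :
    ∫⁻ t, ENNReal.ofReal (exp (t - v / 2)) ∂gaussianReal 0 v = 1 := by
  have h := measure_univ (μ := gaussianReal (v * 1) v)
  rw [gaussianReal_eq_withDensity, withDensity_apply _ .univ, setLIntegral_univ] at h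
  simpa using h

end GaussianTilting

section HockeyStick

/-- The hockey-stick divergence `E[(x L - c)⁺]` of the yardstick pair `N(0, v)`, `N(v, v)`, where
`L = exp (t - v / 2)`, `t ∼ N(0, v)`, is their likelihood ratio. The positive part is the truncated
subtraction of `ℝ≥0∞`. -/
noncomputable def gaussianHockeyStick (c : ℝ≥0∞) (v : ℝ≥0) (x : ℝ≥0∞) : ℝ≥0∞ :=
  ∫⁻ t, (x * ENNReal.ofReal (exp (t - v / 2)) - c) ∂gaussianReal 0 v

variable (c x : ℝ≥0∞) (v w : ℝ≥0)

lemma gaussianHockeyStick_zero : gaussianHockeyStick c 0 x = x - c := by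
  simp [gaussianHockeyStick, gaussianReal_zero_var, lintegral_dirac]

lemma lintegral_gaussianHockeyStick :
    ∫⁻ u, gaussianHockeyStick c v (x * ENNReal.ofReal (exp (u - w / 2))) ∂gaussianReal 0 w =
      gaussianHockeyStick c (w + v) x := by
  have hconv : gaussianReal 0 (w + v) = (gaussianReal 0 w).conv (gaussianReal 0 v) := by
    rw [gaussianReal_conv_gaussianReal, zero_add]
  simp only [gaussianHockeyStick]
  rw [hconv, Measure.lintegral_conv (by fun_prop)]
  refine lintegral_congr fun u => lintegral_congr fun t => ?_
  rw [mul_assoc, ← ENNReal.ofReal_mul (exp_pos _).le, ← exp_add]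
  congr 4
  push_cast
  ring

lemma tsub_le_gaussianHockeyStick : x - c ≤ gaussianHockeyStick c v x := by
  rw [tsub_le_iff_right]
  calc x = ∫⁻ t, x * ENNReal.ofReal (exp (t - v / 2)) ∂gaussianReal 0 v := by
        rw [lintegral_const_mul _ (by fun_prop), lintegral_exp_gaussianReal, mul_one]
    _ ≤ ∫⁻ t, (x * ENNReal.ofReal (exp (t - v / 2)) - c + c) ∂gaussianReal 0 v :=
        lintegral_mono fun _ => le_tsub_add
    _ = gaussianHockeyStick c v x + c := by
        rw [lintegral_add_right _ measurable_const, lintegral_const, measure_univ, mul_one,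
          gaussianHockeyStick]

lemma gaussianHockeyStick_mono : Monotone fun v => gaussianHockeyStick c v x := by
  refine monotone_iff_forall_lt.2 fun v w hvw => ?_
  obtain ⟨u, rfl⟩ := exists_add_of_le hvw.le
  simp only [← lintegral_gaussianHockeyStick c x u v]
  exact lintegral_mono fun t => tsub_le_gaussianHockeyStick c _ u

lemma gaussianHockeyStick_eq_lintegral_standard :
    gaussianHockeyStick c v x =
      ∫⁻ t, (x * ENNReal.ofReal (exp (√v * t - v / 2)) - c) ∂gaussianReal 0 1 := by
  have hscale : gaussianReal 0 v = (gaussianReal 0 1).map (√v * ·) := by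
    rw [gaussianReal_map_const_mul, mul_zero, mul_one]
    congr 1
    ext
    simp
  rw [gaussianHockeyStick, hscale, lintegral_map (by fun_prop) (by fun_prop)]

/-- The constant is the likelihood ratio of `N(√v, 1)` and `N(0, 1)` at the threshold `-a` of their
optimal test `[-a, ∞)`. -/
lemma gaussianHockeyStick_add_mul_gaussianReal_Iic (a : ℝ) :
    gaussianHockeyStick (ENNReal.ofReal (exp (√v * -a - v / 2))) v 1 +
        ENNReal.ofReal (exp (√v * -a - v / 2)) * gaussianReal 0 1 (Set.Iic a) =
      gaussianReal 0 1 (Set.Iic (a + √v)) := by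
  have hshift : gaussianReal 0 1 (Set.Iic (a + √v)) = gaussianReal √v 1 (Set.Ici (-a)) := by
    have hmap := gaussianReal_map_const_add (μ := 0) (v := 1) √v
    rw [zero_add] at hmap
    rw [← gaussianReal_Ici_neg, ← hmap, Measure.map_apply (by fun_prop) measurableSet_Ici]
    congr 1
    ext t
    simp [add_comm]
  have htilt := gaussianReal_eq_withDensity √v 1
  simp only [NNReal.coe_one, one_mul, sq_sqrt v.coe_nonneg] at htilt
  have hIci : MeasurableSet (Set.Ici (-a)) := measurableSet_Ici
  rw [hshift, htilt, withDensity_apply _ hIci, ← gaussianReal_Ici_neg,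
    gaussianHockeyStick_eq_lintegral_standard, ← lintegral_indicator_const hIci,
    ← lintegral_indicator hIci, ← lintegral_add_right _ (measurable_const.indicator hIci)]
  refine lintegral_congr fun t => ?_
  by_cases ht : -a ≤ t
  · simp only [Set.indicator_of_mem (Set.mem_Ici.2 ht), one_mul]
    exact tsub_add_cancel_of_le (by gcongr)
  · simp only [Set.indicator_of_notMem (mt Set.mem_Ici.1 ht), one_mul, add_zero]
    exact tsub_eq_zero_of_le (by gcongr; exact (not_le.1 ht).le)

end HockeyStick

/-- `P` and `Q` are at most as distinguishable as the yardstick pair `N(0, w)`, `N(w, w)`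
(equivalently `N(0, 1)`, `N(√w, 1)`). The definition is in continuation-passing form: whatever
experiment of budget `v` is run on top of `P` and `Q`, with conditional rejection probabilities `G`
and `G'`, the total budget is at most `w + v`. This makes adaptive composition immediate. -/
def GaussianDominated {Ω : Type*} [MeasurableSpace Ω] (w : ℝ≥0) (P Q : Measure Ω) : Prop :=
  ∀ ⦃G G' : Ω → ℝ≥0∞⦄, Measurable G → Measurable G' → ∀ (c : ℝ≥0∞) (v : ℝ≥0),
    (∀ ω x, x * G' ω ≤ c * G ω + gaussianHockeyStick c v x) →
      ∀ x, x * ∫⁻ ω, G' ω ∂Q ≤ c * ∫⁻ ω, G ω ∂P + gaussianHockeyStick c (w + v) x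

namespace GaussianDominated

variable {Ω Ω' : Type*} [MeasurableSpace Ω] [MeasurableSpace Ω'] {P Q : Measure Ω} {w b : ℝ≥0}

lemma refl (P : Measure Ω) [IsProbabilityMeasure P] : GaussianDominated 0 P P := by
  intro G G' hG hG' c v h x
  calc x * ∫⁻ ω, G' ω ∂P = ∫⁻ ω, x * G' ω ∂P := (lintegral_const_mul _ hG').symm
    _ ≤ ∫⁻ ω, (c * G ω + gaussianHockeyStick c v x) ∂P := lintegral_mono fun ω => h ω x
    _ = c * ∫⁻ ω, G ω ∂P + gaussianHockeyStick c (0 + v) x := by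
      rw [lintegral_add_right _ measurable_const, lintegral_const_mul _ hG, lintegral_const,
        measure_univ, mul_one, zero_add]

lemma mono (h : GaussianDominated w P Q) (hwb : w ≤ b) : GaussianDominated b P Q :=
  fun _ _ hG hG' c v hv x => (h hG hG' c v hv x).trans <|
    add_le_add_right (gaussianHockeyStick_mono c x (add_le_add_left hwb v)) _

lemma map (h : GaussianDominated w P Q) {f : Ω → Ω'} (hf : Measurable f) :
    GaussianDominated w (P.map f) (Q.map f) := by
  intro G G' hG hG' c v hv x
  rw [lintegral_map hG hf, lintegral_map hG' hf]
  exact h (hG.comp hf) (hG'.comp hf) c v (fun ω => hv (f ω)) x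

lemma compProd [SFinite P] [SFinite Q] {κ η : Kernel Ω Ω'} [IsSFiniteKernel κ] [IsSFiniteKernel η]
    (h : GaussianDominated w P Q) (hκ : ∀ ω, GaussianDominated b (κ ω) (η ω)) :
    GaussianDominated (w + b) (P ⊗ₘ κ) (Q ⊗ₘ η) := by
  intro G G' hG hG' c v hv x
  rw [Measure.lintegral_compProd hG, Measure.lintegral_compProd hG', add_assoc]
  refine h hG.lintegral_kernel_prod_right' hG'.lintegral_kernel_prod_right' c (b + v)
    (fun ω => ?_) x
  exact hκ ω (hG.comp measurable_prodMk_left) (hG'.comp measurable_prodMk_left) c v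
    fun ω' => hv (ω, ω')

lemma prod [SFinite P] [SFinite Q] {P' Q' : Measure Ω'} [SFinite P'] [SFinite Q']
    (h : GaussianDominated w P Q) (h' : GaussianDominated b P' Q') :
    GaussianDominated (w + b) (P.prod P') (Q.prod Q') := by
  simpa only [Measure.compProd_const] using
    h.compProd (κ := Kernel.const Ω P') (η := Kernel.const Ω Q') fun _ => h'

lemma pi {n : ℕ} {α : Fin n → Type*} [∀ i, MeasurableSpace (α i)] {P Q : ∀ i, Measure (α i)}
    [∀ i, IsProbabilityMeasure (P i)] [∀ i, IsProbabilityMeasure (Q i)] {w : Fin n → ℝ≥0}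
    (h : ∀ i, GaussianDominated (w i) (P i) (Q i)) :
    GaussianDominated (∑ i, w i) (Measure.pi P) (Measure.pi Q) := by
  induction n with
  | zero =>
    rw [Measure.pi_of_empty P, Measure.pi_of_empty Q]
    simpa using refl _
  | succ n ih =>
    rw [Fin.sum_univ_succ, ← (measurePreserving_piFinSuccAbove P 0).symm.map_eq,
      ← (measurePreserving_piFinSuccAbove Q 0).symm.map_eq]
    exact ((h 0).prod (ih fun i => h _)).map (MeasurableEquiv.measurable _)

lemma gaussianReal_zero_self (w : ℝ≥0) :
    GaussianDominated w (gaussianReal 0 w) (gaussianReal w w) := by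
  intro G G' hG hG' c v h x
  have htilt := gaussianReal_eq_withDensity 1 w
  simp only [mul_one, one_mul, one_pow] at htilt
  rw [htilt, lintegral_withDensity_eq_lintegral_mul _ (by fun_prop) hG',
    ← lintegral_const_mul _ (by fun_prop), ← lintegral_gaussianHockeyStick c x v w,
    ← lintegral_const_mul _ hG, ← lintegral_add_left (by fun_prop)]
  refine lintegral_mono fun t => ?_
  rw [Pi.mul_apply, ← mul_assoc]
  exact h t _

lemma of_gaussianReal (u u' : ℝ) {s : ℝ≥0} (hs : s ≠ 0) :
    GaussianDominated (‖u' - u‖₊ ^ 2 / s) (gaussianReal u s) (gaussianReal u' s) := by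
  rcases eq_or_ne u' u with rfl | hne
  · simpa using refl _
  set w : ℝ≥0 := ‖u' - u‖₊ ^ 2 / s with hw
  have hmap (m : ℝ) : (gaussianReal m w).map (fun t => u + s / (u' - u) * t) =
      gaussianReal (u + s / (u' - u) * m) s := by
    have hcomp := Measure.map_map (μ := gaussianReal m w) (measurable_const_add u)
      (measurable_const_mul (s / (u' - u)))
    rw [gaussianReal_map_const_mul, gaussianReal_map_const_add, add_comm] at hcomp
    refine hcomp.symm.trans ?_
    congr 1
    ext
    simp only [hw, NNReal.coe_mul, NNReal.coe_mk, NNReal.coe_div, NNReal.coe_pow, coe_nnnorm,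
      norm_eq_abs, sq_abs]
    field_simp
  have h := (gaussianReal_zero_self w).map (f := fun t => u + s / (u' - u) * t) (by fun_prop)
  rw [hmap, hmap] at h
  convert h using 2
  · simp
  · simp only [hw, NNReal.coe_div, NNReal.coe_pow, coe_nnnorm, norm_eq_abs, sq_abs]
    field_simp
    ring

lemma measure_le_gaussianReal_Iic (h : GaussianDominated w P Q) {S : Set Ω} (hS : MeasurableSet S)
    {a : ℝ} (hP : P S ≤ gaussianReal 0 1 (Set.Iic a)) :
    Q S ≤ gaussianReal 0 1 (Set.Iic (a + √w)) := by
  set c := ENNReal.ofReal (exp (√w * -a - w / 2))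
  have hind : Measurable (S.indicator (1 : Ω → ℝ≥0∞)) := measurable_one.indicator hS
  have htest (ω : Ω) (x : ℝ≥0∞) : x * S.indicator 1 ω ≤
      c * S.indicator 1 ω + gaussianHockeyStick c 0 x := by
    rw [gaussianHockeyStick_zero]
    by_cases hω : ω ∈ S <;> simp [hω, le_add_tsub]
  have hQ := h hind hind c 0 htest 1
  rw [lintegral_indicator_one hS, lintegral_indicator_one hS, one_mul, add_zero, add_comm] at hQ
  rw [← gaussianHockeyStick_add_mul_gaussianReal_Iic]
  exact hQ.trans (by gcongr)

lemma real_le_Phi [IsFiniteMeasure P] (h : GaussianDominated w P Q) {S : Set Ω}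
    (hS : MeasurableSet S) {a : ℝ} (hP : P.real S ≤ Phi a) : Q.real S ≤ Phi (a + √w) :=
  ENNReal.toReal_mono (measure_ne_top _ _) <| h.measure_le_gaussianReal_Iic hS <|
    (ENNReal.toReal_le_toReal (measure_ne_top _ _) (measure_ne_top _ _)).1 hP

variable [IsProbabilityMeasure P] [IsProbabilityMeasure Q]

lemma Phi_le_real (h : GaussianDominated w P Q) {S : Set Ω} (hS : MeasurableSet S) {a : ℝ}
    (hP : Phi a ≤ P.real S) : Phi (a - √w) ≤ Q.real S := by
  have hcompl := h.real_le_Phi hS.compl (a := -a) (by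
    rw [probReal_compl_eq_one_sub hS, Phi_neg]
    linarith)
  rw [probReal_compl_eq_one_sub hS, show -a + √w = -(a - √w) by ring, Phi_neg] at hcompl
  linarith

lemma real_le_real (h : GaussianDominated w P Q) {A B : Set Ω} (hA : MeasurableSet A)
    (hB : MeasurableSet B) {p q : ℝ} (hp : p ∈ Set.Ioo (0 : ℝ) 1) (hq : q ∈ Set.Ioo (0 : ℝ) 1)
    (hpA : p ≤ P.real A) (hBq : P.real B ≤ q) (hw : 2 * √w ≤ PhiInv p - PhiInv q) :
    Q.real B ≤ Q.real A :=
  calc Q.real B ≤ Phi (PhiInv q + √w) := h.real_le_Phi hB (by rwa [Phi_PhiInv hq])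
    _ ≤ Phi (PhiInv p - √w) := Phi_mono (by linarith)
    _ ≤ Q.real A := h.Phi_le_real hA (by rwa [Phi_PhiInv hp])

end GaussianDominated

section SphericalGaussian

variable {d : ℕ}

lemma l2norm_nonneg (x : Fin d → ℝ) : 0 ≤ l2norm x := sqrt_nonneg _

lemma sq_l2norm (x : Fin d → ℝ) : l2norm x ^ 2 = ∑ i, x i ^ 2 :=
  sq_sqrt (Finset.sum_nonneg fun _ _ => sq_nonneg _)

instance isProbabilityMeasure_gaussPi (v : Fin d → ℝ) (s : ℝ≥0) :
    IsProbabilityMeasure (gaussPi d v s) := by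
  unfold gaussPi
  infer_instance

lemma gaussPi_map_const_add (v : Fin d → ℝ) (s : ℝ≥0) :
    (gaussPi d 0 s).map (v + ·) = gaussPi d v s := by
  have h := Measure.pi_map_pi (μ := fun _ : Fin d => gaussianReal 0 s)
    (f := fun i t => v i + t) fun i => by fun_prop
  simp only [gaussianReal_map_const_add, zero_add] at h
  exact h

/-- The kernel `v ↦ N(v, s · I_d)`, through which the adaptive steps are written as Markov
transitions. -/
noncomputable def gaussKernel (d : ℕ) (s : ℝ≥0) : Kernel (Fin d → ℝ) (Fin d → ℝ) where
  toFun v := gaussPi d v s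
  measurable' := Measure.measurable_of_measurable_coe _ fun S hS => by
    have hadd : Measurable fun p : (Fin d → ℝ) × (Fin d → ℝ) => p.1 + p.2 := by fun_prop
    have hcoe (v : Fin d → ℝ) :
        gaussPi d v s S = gaussPi d 0 s (Prod.mk v ⁻¹' ((fun p => p.1 + p.2) ⁻¹' S)) := by
      rw [← gaussPi_map_const_add v, Measure.map_apply (by fun_prop) hS]
      rfl
    exact funext hcoe ▸ measurable_measure_prodMk_left (hadd hS)

instance isMarkovKernel_gaussKernel (s : ℝ≥0) : IsMarkovKernel (gaussKernel d s) :=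
  ⟨fun v => isProbabilityMeasure_gaussPi v s⟩

lemma compProd_comap_gaussKernel {Ω : Type*} [MeasurableSpace Ω] (P : Measure Ω) [SFinite P]
    {f : Ω → Fin d → ℝ} (hf : Measurable f) (s : ℝ≥0) :
    P ⊗ₘ (gaussKernel d s).comap f hf =
      (P.prod (gaussPi d 0 s)).map fun p => (p.1, f p.1 + p.2) := by
  refine Measure.ext_of_lintegral _ fun F hF => ?_
  rw [Measure.lintegral_compProd hF, lintegral_map hF (by fun_prop), lintegral_prod _ (by fun_prop)]
  refine lintegral_congr fun ω => ?_
  have hker : (gaussKernel d s).comap f hf ω = (gaussPi d 0 s).map (f ω + ·) :=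
    (gaussPi_map_const_add (f ω) s).symm
  rw [hker, lintegral_map (by fun_prop) (by fun_prop)]

lemma gaussianDominated_gaussPi {u u' : Fin d → ℝ} {s w : ℝ≥0} (hs : s ≠ 0)
    (h : l2norm (u' - u) ^ 2 ≤ w * s) : GaussianDominated w (gaussPi d u s) (gaussPi d u' s) := by
  refine (GaussianDominated.pi fun i => .of_gaussianReal (u i) (u' i) hs).mono ?_
  rw [← Finset.sum_div, div_le_iff₀ (pos_iff_ne_zero.2 hs), ← NNReal.coe_le_coe]
  simpa [sq_l2norm] using h

end SphericalGaussian

lemma measurePreserving_update {ι : Type*} [Fintype ι] [DecidableEq ι] {α : ι → Type*}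
    [∀ i, MeasurableSpace (α i)] (μ : ∀ i, Measure (α i)) [∀ i, IsProbabilityMeasure (μ i)]
    (i : ι) :
    MeasurePreserving (fun p : (∀ j, α j) × α i => Function.update p.1 i p.2)
      ((Measure.pi μ).prod (μ i)) (Measure.pi μ) := by
  refine ⟨measurable_update', Measure.ext_of_lintegral _ fun f hf => ?_⟩
  have hf' : Measurable fun p : (∀ j, α j) × α i => f (Function.update p.1 i p.2) :=
    hf.comp measurable_update'
  rw [lintegral_map hf measurable_update', lintegral_prod _ hf'.aemeasurable]
  refine lintegral_eq_of_lmarginal_eq {i} hf'.lintegral_prod_right' hf ?_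
  simp [lmarginal_singleton]

section Trajectory

variable {k d : ℕ} {dims : Fin k → ℕ}
  (θ : ∀ i : Fin k, (Fin d → ℝ) → (∀ j : Fin k, Fin (dims j) → ℝ) → (Fin (dims i) → ℝ))

lemma trajAux_succ {n : ℕ} (hn : n < k) (X : Fin d → ℝ) (z : ∀ j : Fin k, Fin (dims j) → ℝ) :
    trajAux θ X z (n + 1) = Function.update (trajAux θ X z n) ⟨n, hn⟩
      (θ ⟨n, hn⟩ X (trajAux θ X z n) + z ⟨n, hn⟩) := by
  rw [trajAux, dif_pos hn]

lemma trajAux_update_of_le (X : Fin d → ℝ) (z : ∀ j : Fin k, Fin (dims j) → ℝ) (i : Fin k)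
    (ζ : Fin (dims i) → ℝ) {n : ℕ} (hn : n ≤ i) :
    trajAux θ X (Function.update z i ζ) n = trajAux θ X z n := by
  induction n with
  | zero => rfl
  | succ n ih =>
    have hne : (⟨n, by omega⟩ : Fin k) ≠ i := Fin.ne_of_val_ne (by simp; omega)
    rw [trajAux_succ θ (by omega), trajAux_succ θ (by omega), ih (by omega),
      Function.update_of_ne hne]

variable {θ} {X X' : Fin d → ℝ}

lemma measurable_trajAux (hθ : ∀ i, Measurable (θ i X)) {n : ℕ} (hn : n ≤ k) :
    Measurable fun z => trajAux θ X z n := by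
  induction n with
  | zero => exact measurable_const
  | succ n ih =>
    have hprev := ih (by omega)
    simp only [trajAux_succ θ hn]
    exact measurable_update'.comp
      (hprev.prodMk (((hθ _).comp hprev).add (measurable_pi_apply _)))

variable (θ X) in
/-- The law of the first `n` outputs of the adaptive mechanism run on `X` with noise variances
`s i`; as in `trajAux`, the remaining outputs are `0`. -/
noncomputable def trajLaw (s : Fin k → ℝ≥0) (n : ℕ) : Measure (∀ j : Fin k, Fin (dims j) → ℝ) :=
  (Measure.pi fun j => gaussPi (dims j) 0 (s j)).map fun z => trajAux θ X z n

instance sFinite_trajLaw (s : Fin k → ℝ≥0) (n : ℕ) : SFinite (trajLaw θ X s n) := by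
  unfold trajLaw
  infer_instance

lemma trajLaw_succ (hθ : ∀ i, Measurable (θ i X)) (s : Fin k → ℝ≥0) {n : ℕ} (hn : n < k) :
    trajLaw θ X s (n + 1) =
      (trajLaw θ X s n ⊗ₘ (gaussKernel (dims ⟨n, hn⟩) (s ⟨n, hn⟩)).comap (θ ⟨n, hn⟩ X) (hθ _)).map
        fun p => Function.update p.1 ⟨n, hn⟩ p.2 := by
  have hprev := measurable_trajAux hθ hn.le
  have hpair : (trajLaw θ X s n).prod (gaussPi (dims ⟨n, hn⟩) 0 (s ⟨n, hn⟩)) =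
      ((Measure.pi fun j => gaussPi (dims j) 0 (s j)).prod
        (gaussPi (dims ⟨n, hn⟩) 0 (s ⟨n, hn⟩))).map (Prod.map (fun z => trajAux θ X z n) id) := by
    rw [← Measure.map_prod_map _ _ hprev measurable_id, Measure.map_id, trajLaw]
  rw [trajLaw, ← (measurePreserving_update _ ⟨n, hn⟩).map_eq,
    Measure.map_map (measurable_trajAux hθ hn) measurable_update', compProd_comap_gaussKernel,
    hpair, Measure.map_map (by fun_prop) (by fun_prop),
    Measure.map_map (measurable_update'.comp (by fun_prop)) (by fun_prop)]
  congr 1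
  ext1 ⟨z, ζ⟩
  simp [trajAux_succ θ hn, trajAux_update_of_le θ X z ⟨n, hn⟩ ζ le_rfl]

lemma gaussianDominated_trajLaw (hθ : ∀ i, Measurable (θ i X)) (hθ' : ∀ i, Measurable (θ i X'))
    {s b : Fin k → ℝ≥0} (hs : ∀ i, s i ≠ 0)
    (hb : ∀ i m, l2norm (θ i X' m - θ i X m) ^ 2 ≤ b i * s i) {n : ℕ} (hn : n ≤ k) :
    GaussianDominated (∑ i : Fin n, b (Fin.castLE hn i)) (trajLaw θ X s n) (trajLaw θ X' s n) := by
  induction n with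
  | zero => simpa [trajLaw, trajAux] using GaussianDominated.refl _
  | succ n ih =>
    rw [Fin.sum_univ_castSucc, trajLaw_succ hθ s hn, trajLaw_succ hθ' s hn]
    exact ((ih (Nat.le_of_lt hn)).compProd fun m =>
      gaussianDominated_gaussPi (hs _) (hb _ m)).map measurable_update'

variable {Y : Type*} [MeasurableSpace Y] {g : (∀ j : Fin k, Fin (dims j) → ℝ) → Y}

lemma adaptiveMech_eq_map_trajLaw (hθ : ∀ i, Measurable (θ i X)) (hg : Measurable g)
    (σ : Fin k → ℝ) :
    adaptiveMech θ g σ X = (trajLaw θ X (fun i => (σ i ^ 2).toNNReal) k).map g :=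
  (Measure.map_map hg (measurable_trajAux hθ le_rfl)).symm

lemma isProbabilityMeasure_adaptiveMech (hθ : ∀ i, Measurable (θ i X)) (hg : Measurable g)
    (σ : Fin k → ℝ) : IsProbabilityMeasure (adaptiveMech θ g σ X) :=
  Measure.isProbabilityMeasure_map (hg.comp (measurable_trajAux hθ le_rfl)).aemeasurable

lemma gaussianDominated_adaptiveMech (hθ : ∀ i, Measurable (θ i X))
    (hθ' : ∀ i, Measurable (θ i X')) (hg : Measurable g) {σ : Fin k → ℝ} (hσ : ∀ i, σ i ≠ 0)
    {r : ℝ≥0} (hr : ∀ i m, l2norm (θ i X' m - θ i X m) ≤ r) :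
    GaussianDominated (∑ i, r ^ 2 / (σ i ^ 2).toNNReal)
      (adaptiveMech θ g σ X) (adaptiveMech θ g σ X') := by
  have hs (i : Fin k) : (σ i ^ 2).toNNReal ≠ 0 := by simpa using hσ i
  rw [adaptiveMech_eq_map_trajLaw hθ hg, adaptiveMech_eq_map_trajLaw hθ' hg]
  refine (gaussianDominated_trajLaw (b := fun i => r ^ 2 / (σ i ^ 2).toNNReal) hθ hθ' hs
    (fun i m => ?_) le_rfl).map hg
  rw [← NNReal.coe_mul, div_mul_cancel₀ _ (hs i), NNReal.coe_pow]
  exact pow_le_pow_left₀ (l2norm_nonneg _) (hr i m) 2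

end Trajectory

theorem adaptive_randomized_smoothing_general {k d : ℕ} {dims : Fin k → ℕ} {Y : Type*}
    [MeasurableSpace Y] [MeasurableSingletonClass Y]
    (σ : Fin k → ℝ) (hσ : ∀ i, 0 < σ i)
    (θ : ∀ i : Fin k, (Fin d → ℝ) → (∀ j : Fin k, Fin (dims j) → ℝ) → (Fin (dims i) → ℝ))
    (hθmeas : ∀ i X, Measurable (θ i X))
    (hθlip : ∀ (i : Fin k) (X X' : Fin d → ℝ) (m : ∀ j : Fin k, Fin (dims j) → ℝ),
      l2norm (θ i X m - θ i X' m) ≤ l2norm (X - X'))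
    (g : (∀ j : Fin k, Fin (dims j) → ℝ) → Y) (hg : Measurable g)
    (X : Fin d → ℝ) (yPlus : Y) (pPlus pMinus : ℝ)
    (hpPlus : pPlus ∈ Set.Ioo (0 : ℝ) 1) (hpMinus : pMinus ∈ Set.Ioo (0 : ℝ) 1)
    (hplus : ((adaptiveMech θ g σ X) {yPlus}).toReal ≥ pPlus)
    (horder : pPlus ≥ pMinus)
    (hminus : ∀ y : Y, y ≠ yPlus → ((adaptiveMech θ g σ X) {y}).toReal ≤ pMinus) :
    ∀ e : Fin d → ℝ,
      l2norm e ≤ 1 / (2 * Real.sqrt (∑ i, 1 / (σ i) ^ 2)) * (PhiInv pPlus - PhiInv pMinus) →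
      ∀ y : Y,
        ((adaptiveMech θ g σ (X + e)) {yPlus}).toReal ≥
          ((adaptiveMech θ g σ (X + e)) {y}).toReal := by
  intro e he y
  rcases eq_or_ne y yPlus with rfl | hy
  · exact le_rfl
  lift l2norm e to ℝ≥0 using l2norm_nonneg e with r hr
  have hdom := gaussianDominated_adaptiveMech (hθmeas · X) (hθmeas · (X + e)) hg
    (fun i => (hσ i).ne') (r := r) fun i m => by
      simpa [hr] using hθlip i (X + e) X m
  have := isProbabilityMeasure_adaptiveMech (hθmeas · X) hg σ
  have := isProbabilityMeasure_adaptiveMech (hθmeas · (X + e)) hg σ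
  have hsqrt : √(∑ i, r ^ 2 / (σ i ^ 2).toNNReal : ℝ≥0) = r * √(∑ i, 1 / σ i ^ 2) := by
    rw [← sqrt_sq r.coe_nonneg, ← sqrt_mul (sq_nonneg _), Finset.mul_sum]
    simp [div_eq_mul_inv, sq_nonneg]
  refine hdom.real_le_real (measurableSet_singleton _) (measurableSet_singleton _) hpPlus hpMinus
    hplus (hminus y hy) ?_
  have hquantile : PhiInv pMinus ≤ PhiInv pPlus := monotoneOn_PhiInv hpMinus hpPlus horder
  rw [hsqrt]
  rcases (sqrt_nonneg (∑ i, 1 / σ i ^ 2)).eq_or_lt with hzero | hpos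
  · rw [← hzero]
    linarith
  · rw [one_div_mul_eq_div, le_div_iff₀ (by positivity)] at he
    linarith

/-- **Main result: Adaptive Randomized Smoothing.**
Each adaptive step `θ_i` depends only on the outputs of previous steps and is 1-Lipschitz
in the input `X`.  If `P(M(X) = y₊) ≥ p₊ ≥ p₋ ≥ max_{y ≠ y₊} P(M(X) = y)` then for every
`e` with `‖e‖₂ ≤ (1/(2√(Σᵢ 1/σᵢ²)))(Φ⁻¹(p₊) − Φ⁻¹(p₋))`, `y₊` remains a most probable
class of the adaptive mechanism at `X + e`. -/
theorem adaptive_randomized_smoothing {k d : ℕ} {dims : Fin k → ℕ} {Y : Type*} [Fintype Y]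
    [MeasurableSpace Y] [MeasurableSingletonClass Y]
    (σ : Fin k → ℝ) (hσ : ∀ i, 0 < σ i)
    (θ : ∀ i : Fin k, (Fin d → ℝ) → (∀ j : Fin k, Fin (dims j) → ℝ) → (Fin (dims i) → ℝ))
    (hθmeas : ∀ i, Measurable fun q : (Fin d → ℝ) × (∀ j : Fin k, Fin (dims j) → ℝ) =>
      θ i q.1 q.2)
    (hθprefix : ∀ (i : Fin k) (X : Fin d → ℝ) (m m' : ∀ j : Fin k, Fin (dims j) → ℝ),
      (∀ j : Fin k, j < i → m j = m' j) → θ i X m = θ i X m')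
    (hθlip : ∀ (i : Fin k) (X X' : Fin d → ℝ) (m : ∀ j : Fin k, Fin (dims j) → ℝ),
      l2norm (θ i X m - θ i X' m) ≤ l2norm (X - X'))
    (g : (∀ j : Fin k, Fin (dims j) → ℝ) → Y) (hg : Measurable g)
    (X : Fin d → ℝ) (yPlus : Y) (pPlus pMinus : ℝ)
    (hpPlus : pPlus ∈ Set.Ioo (0 : ℝ) 1) (hpMinus : pMinus ∈ Set.Ioo (0 : ℝ) 1)
    (hplus : ((adaptiveMech θ g σ X) {yPlus}).toReal ≥ pPlus)
    (horder : pPlus ≥ pMinus)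
    (hminus : ∀ y : Y, y ≠ yPlus → ((adaptiveMech θ g σ X) {y}).toReal ≤ pMinus) :
    ∀ e : Fin d → ℝ,
      l2norm e ≤ 1 / (2 * Real.sqrt (∑ i, 1 / (σ i) ^ 2)) * (PhiInv pPlus - PhiInv pMinus) →
      ∀ y : Y,
        ((adaptiveMech θ g σ (X + e)) {yPlus}).toReal ≥
          ((adaptiveMech θ g σ (X + e)) {y}).toReal :=
  adaptive_randomized_smoothing_general σ hσ θ (fun i _ => (hθmeas i).comp measurable_prodMk_left)
    hθlip g hg X yPlus pPlus pMinus hpPlus hpMinus hplus horder hminus
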